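/- Every redundant edge of G provides a cycle for at most two unsatisfied edges of G. -/

import Mathlib

/-- A set `S` of directed edges strongly connects the vertex set `V`:
for every pair of vertices there is a directed path using only edges of `S`. -/
def StronglyConnects {V : Type*} (S : Set (V × V)) : Prop :=
  ∀ u v : V, Relation.ReflTransGen (fun a b => (a, b) ∈ S) u v

/-- The edges of the closed walk determined by the vertex list `c`
(consecutive pairs, wrapping around from the last vertex to the first). -/
def cycleEdges {V : Type*} (c : List V) : List (V × V) := c.zip (c.rotate 1)

/-- `c` is a directed cycle of the graph with edge set `E`: a nonempty list of
distinct vertices all of whose consecutive (wrap-around) pairs are edges.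
Its length (number of edges) is `c.length`. -/
def IsCycle {V : Type*} (E : Set (V × V)) (c : List V) : Prop :=
  c ≠ [] ∧ c.Nodup ∧ ∀ e ∈ cycleEdges c, e ∈ E

/-- An edge is redundant if deleting it leaves a strongly connected graph. -/
def Redundant {V : Type*} (E : Set (V × V)) (e : V × V) : Prop :=
  e ∈ E ∧ StronglyConnects (E \ {e})

/-- An edge is necessary if deleting it destroys strong connectivity. -/
def Necessary {V : Type*} (E : Set (V × V)) (e : V × V) : Prop :=
  e ∈ E ∧ ¬ StronglyConnects (E \ {e})

/-- The set of necessary edges. -/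
def necessarySet {V : Type*} (E : Set (V × V)) : Set (V × V) :=
  {e | Necessary E e}

/-- An edge `(u, v)` is unsatisfied if there is no directed path from `v`
back to `u` consisting only of necessary edges. -/
def Unsatisfied {V : Type*} (E : Set (V × V)) (e : V × V) : Prop :=
  e ∈ E ∧ ¬ Relation.ReflTransGen (fun a b => Necessary E (a, b)) e.2 e.1

/-- A redundant edge `r` provides a cycle for an unsatisfied edge `(u, v)` if
there is a directed path from `v` to `u` consisting of necessary edges and `r`. -/
def ProvidesCycle {V : Type*} (E : Set (V × V)) (r : V × V) (e : V × V) : Prop :=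
  Relation.ReflTransGen (fun a b => Necessary E (a, b) ∨ (a, b) = r) e.2 e.1

/-- `w` is a cut vertex: deleting `w` disconnects the underlying undirected graph,
i.e. some two vertices distinct from `w` are joined by no undirected path avoiding `w`. -/
def IsCutVertex {V : Type*} (E : Set (V × V)) (w : V) : Prop :=
  ∃ u v : V, u ≠ w ∧ v ≠ w ∧
    ¬ Relation.ReflTransGen
        (fun a b => a ≠ w ∧ b ≠ w ∧ ((a, b) ∈ E ∨ (b, a) ∈ E)) u v

/-!
Since every directed cycle has length at most three, every edge `x → y` of `G` is closed up by a
path from `y` to `x` of length at most two in any given strongly connected spanning subgraph. Let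
`r = a → b` be redundant. An unsatisfied edge for which `r` provides a cycle is either `b → a` or
lies on a directed triangle `a → b → u → a` whose third edge is necessary. Every path from `a` to
`b` avoiding `r` meets `u`, since otherwise `b → u → a` would close it up to a cycle of length at
least four. It follows that `u` is unique, and that `b → u` and `u → a` are both redundant when
`b → a` is an edge, because then `a → u → b` is a path.
-/

open List Relation

section CyclesAndPaths

variable {V : Type*} {E : Set (V × V)} {R : V → V → Prop} {a b u x y : V}

theorem exists_nodup_isChain_cons_of_reflTransGen (h : ReflTransGen R x y) :
    ∃ l, (x :: l).Nodup ∧ IsChain R (x :: l) ∧ (x :: l).getLast (cons_ne_nil x l) = y := by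
  induction h using ReflTransGen.head_induction_on with
  | refl => exact ⟨[], nodup_singleton y, .singleton y, rfl⟩
  | @head x z hxz _ ih =>
    obtain ⟨l, hnodup, hchain, hlast⟩ := ih
    by_cases hx : x ∈ z :: l
    · obtain ⟨s, t, hst⟩ := append_of_mem hx
      have hsuffix : x :: t <:+ z :: l := ⟨s, hst.symm⟩
      exact ⟨t, hnodup.sublist hsuffix.sublist, hchain.suffix hsuffix,
        (hsuffix.getLast (cons_ne_nil x t)).trans hlast⟩
    · exact ⟨z :: l, nodup_cons.2 ⟨hx, hnodup⟩, hchain.cons_cons hxz, by rwa [getLast_cons_cons]⟩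

theorem isCycle_cons_iff {l : List V} :
    IsCycle E (x :: l) ↔
      (x :: l).Nodup ∧ IsChain (fun p q => (p, q) ∈ E) (x :: l ++ [x]) := by
  rw [isChain_cons_append_singleton_iff_forall₂, forall₂_iff_zip, IsCycle, cycleEdges,
    rotate_cons_succ, rotate_zero]
  simp

theorem isCycle_cons_of_isChain {l : List V} (hnodup : (x :: l).Nodup)
    (hchain : IsChain (fun p q => (p, q) ∈ E) (x :: l))
    (hclose : ((x :: l).getLast (cons_ne_nil x l), x) ∈ E) : IsCycle E (x :: l) := by
  refine isCycle_cons_iff.2 ⟨hnodup, hchain.append (.singleton x) ?_⟩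
  simpa [getLast?_eq_some_getLast] using hclose

theorem isCycle_triple_iff :
    IsCycle E [a, b, u] ↔
      (a ≠ b ∧ a ≠ u ∧ b ≠ u) ∧ (a, b) ∈ E ∧ (b, u) ∈ E ∧ (u, a) ∈ E := by
  simp [isCycle_cons_iff, and_assoc]

theorem IsCycle.rotate_triple (h : IsCycle E [a, b, u]) : IsCycle E [b, u, a] := by
  obtain ⟨⟨hab, hau, hbu⟩, hadj_ab, hadj_bu, hadj_ua⟩ := isCycle_triple_iff.1 h
  exact isCycle_triple_iff.2 ⟨⟨hbu, hab.symm, hau.symm⟩, hadj_bu, hadj_ua, hadj_ab⟩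

theorem eq_or_adj_or_exists_adj_adj_of_reflTransGen
    (hcyc : ∀ c : List V, IsCycle E c → c.length ≤ 3) (hRE : ∀ p q, R p q → (p, q) ∈ E)
    (hxy : (x, y) ∈ E) (h : ReflTransGen R y x) :
    y = x ∨ R y x ∨ ∃ w, [y, w, x].Nodup ∧ R y w ∧ R w x := by
  obtain ⟨l, hnodup, hchain, hlast⟩ := exists_nodup_isChain_cons_of_reflTransGen h
  have hlength := hcyc _ (isCycle_cons_of_isChain hnodup (hchain.imp hRE) (hlast ▸ hxy))
  match l, hlength with
  | [], _ => exact .inl hlast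
  | [_], _ =>
    obtain rfl := hlast
    exact .inr (.inl (by simpa using hchain))
  | [w, _], _ =>
    obtain rfl := hlast
    exact .inr (.inr ⟨w, hnodup, by simpa using hchain⟩)

end CyclesAndPaths

section RedundantEdges

variable {V : Type*} {E S : Set (V × V)} {a b u v x y : V}

theorem StronglyConnects.mono {T : Set (V × V)} (hS : StronglyConnects S) (hST : S ⊆ T) :
    StronglyConnects T :=
  fun x y => ReflTransGen.mono (fun _ _ h => hST h) x y (hS x y)

theorem StronglyConnects.sdiff_singleton_of_reflTransGen (hE : StronglyConnects E)
    (hdetour : ReflTransGen (fun p q => (p, q) ∈ E \ {(x, y)}) x y) :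
    StronglyConnects (E \ {(x, y)}) := by
  refine fun u v => reflTransGen_closed (fun p q hpq => ?_) u v (hE u v)
  by_cases h : (p, q) = (x, y)
  · obtain ⟨rfl, rfl⟩ := Prod.mk.inj h
    exact hdetour
  · exact .single ⟨hpq, h⟩

/-- The steps along edges of `S` that do not enter `w`. A path of such steps avoids `w` as soon as
it starts at another vertex, so the source of a step is left unrestricted. -/
def StepAvoiding (S : Set (V × V)) (w x y : V) : Prop :=
  (x, y) ∈ S ∧ y ≠ w

theorem reflTransGen_stepAvoiding_or_adj_adj (hcyc : ∀ c : List V, IsCycle E c → c.length ≤ 3)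
    (hSE : S ⊆ E) (hS : StronglyConnects S) (hxy : (x, y) ∈ E) (hxv : x ≠ v) :
    ReflTransGen (StepAvoiding S v) y x ∨ (y, v) ∈ S ∧ (v, x) ∈ S := by
  rcases eq_or_adj_or_exists_adj_adj_of_reflTransGen hcyc (fun _ _ h => hSE h) hxy (hS y x) with
    rfl | hyx | ⟨w, -, hyw, hwx⟩
  · exact .inl .refl
  · exact .inl (.single ⟨hyx, hxv⟩)
  · by_cases hwv : w = v
    · exact .inr ⟨hwv ▸ hyw, hwv ▸ hwx⟩
    · exact .inl (.tail (.single ⟨hyw, hwv⟩) ⟨hwx, hxv⟩)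

theorem not_reflTransGen_stepAvoiding_of_isCycle
    (hcyc : ∀ c : List V, IsCycle E c → c.length ≤ 3) (hu : IsCycle E [a, b, u]) :
    ¬ ReflTransGen (StepAvoiding (E \ {(a, b)}) u) a b := by
  intro hab
  obtain ⟨⟨hne_ab, hne_au, -⟩, -, hbu, hua⟩ := isCycle_triple_iff.1 hu
  -- The step `b → u` is the only way into `u`, so a path `a → u` of length at most two would have
  -- to be `a → b → u`, whose first step is excluded.
  let R : V → V → Prop := fun p q => StepAvoiding (E \ {(a, b)}) u p q ∨ (p, q) = (b, u)
  have hRE : ∀ p q, R p q → (p, q) ∈ E := by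
    rintro p q (h | h)
    · exact h.1.1
    · exact h ▸ hbu
  have eq_of_enter : ∀ {p}, R p u → p = b := by
    rintro p (h | h)
    · exact absurd rfl h.2
    · exact congrArg Prod.fst h
  have hR : ReflTransGen R a u := (ReflTransGen.mono (fun _ _ => .inl) a b hab).tail (.inr rfl)
  rcases eq_or_adj_or_exists_adj_adj_of_reflTransGen hcyc hRE hua hR with
    hau | hau | ⟨w, -, haw, hwu⟩
  · exact hne_au hau
  · exact hne_ab (eq_of_enter hau)
  · obtain rfl : w = b := eq_of_enter hwu
    rcases haw with haw | haw
    · exact haw.1.2 rfl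
    · exact hne_ab (congrArg Prod.fst haw)

theorem not_adj_of_isCycle_of_isCycle (hcyc : ∀ c : List V, IsCycle E c → c.length ≤ 3)
    (huv : u ≠ v) (hu : IsCycle E [a, b, u]) (hv : IsCycle E [a, b, v]) : (u, v) ∉ E := by
  intro hadj
  obtain ⟨⟨hne_ab, hne_au, hne_bu⟩, hab, hbu, -⟩ := isCycle_triple_iff.1 hu
  obtain ⟨⟨-, hne_av, hne_bv⟩, -, -, hva⟩ := isCycle_triple_iff.1 hv
  have hquad : IsCycle E [a, b, u, v] := isCycle_cons_iff.2
    ⟨by simp [hne_ab, hne_au, hne_av, hne_bu, hne_bv, huv], by simp [hab, hbu, hadj, hva]⟩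
  exact absurd (hcyc _ hquad) (by simp)

theorem eq_of_isCycle_of_isCycle_of_redundant (hcyc : ∀ c : List V, IsCycle E c → c.length ≤ 3)
    (hr : Redundant E (a, b)) (hu : IsCycle E [a, b, u]) (hv : IsCycle E [a, b, v]) : u = v := by
  by_contra hne
  obtain ⟨-, -, hbu, hua⟩ := isCycle_triple_iff.1 hu
  obtain ⟨⟨-, -, hbv⟩, -⟩ := isCycle_triple_iff.1 hv
  have hau : ReflTransGen (StepAvoiding (E \ {(a, b)}) v) a u :=
    (reflTransGen_stepAvoiding_or_adj_adj hcyc Set.sdiff_subset hr.2 hua hne).resolve_right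
      fun h => not_adj_of_isCycle_of_isCycle hcyc (Ne.symm hne) hv hu h.2.1
  have hub : ReflTransGen (StepAvoiding (E \ {(a, b)}) v) u b :=
    (reflTransGen_stepAvoiding_or_adj_adj hcyc Set.sdiff_subset hr.2 hbu hbv).resolve_right
      fun h => not_adj_of_isCycle_of_isCycle hcyc hne hu hv h.1.1
  exact not_reflTransGen_stepAvoiding_of_isCycle hcyc hv (hau.trans hub)

theorem not_necessary_of_isCycle_of_adj_swap (hcyc : ∀ c : List V, IsCycle E c → c.length ≤ 3)
    (hr : Redundant E (a, b)) (hba : (b, a) ∈ E) (hu : IsCycle E [a, b, u]) :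
    ¬ Necessary E (b, u) ∧ ¬ Necessary E (u, a) := by
  obtain ⟨⟨hne_ab, hne_au, hne_bu⟩, -⟩ := isCycle_triple_iff.1 hu
  obtain ⟨hau, hub⟩ : (a, u) ∈ E \ {(a, b)} ∧ (u, b) ∈ E \ {(a, b)} :=
    (reflTransGen_stepAvoiding_or_adj_adj hcyc Set.sdiff_subset hr.2 hba hne_bu).resolve_left
      (not_reflTransGen_stepAvoiding_of_isCycle hcyc hu)
  have hE : StronglyConnects E := hr.2.mono Set.sdiff_subset
  constructor
  · refine fun h => h.2 (hE.sdiff_singleton_of_reflTransGen ?_)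
    have hba' : (b, a) ∈ E \ {(b, u)} := ⟨hba, by simp [hne_au]⟩
    have hau' : (a, u) ∈ E \ {(b, u)} := ⟨hau.1, by simp [hne_ab]⟩
    exact .tail (.single hba') hau'
  · refine fun h => h.2 (hE.sdiff_singleton_of_reflTransGen ?_)
    have hub' : (u, b) ∈ E \ {(u, a)} := ⟨hub.1, by simp [hne_ab.symm]⟩
    have hba' : (b, a) ∈ E \ {(u, a)} := ⟨hba, by simp [hne_bu]⟩
    exact .tail (.single hub') hba'

theorem eq_swap_or_exists_isCycle_of_providesCycle
    (hcyc : ∀ c : List V, IsCycle E c → c.length ≤ 3) (hab : (a, b) ∈ E) {e : V × V}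
    (hunsat : Unsatisfied E e) (hprov : ProvidesCycle E (a, b) e) :
    e = (b, a) ∨ ∃ u, IsCycle E [a, b, u] ∧
      (Necessary E (b, u) ∧ e = (u, a) ∨ Necessary E (u, a) ∧ e = (b, u)) := by
  obtain ⟨x, y⟩ := e
  obtain ⟨hxy, hno_return⟩ := hunsat
  have hRE : ∀ p q, Necessary E (p, q) ∨ (p, q) = (a, b) → (p, q) ∈ E := by
    rintro p q (h | h)
    · exact h.1
    · exact h ▸ hab
  rcases eq_or_adj_or_exists_adj_adj_of_reflTransGen hcyc hRE hxy hprov with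
    rfl | hyx | ⟨w, hnodup, hyw, hwx⟩
  · exact absurd .refl hno_return
  · rcases hyx with hyx | hyx
    · exact absurd (.single hyx) hno_return
    · obtain ⟨rfl, rfl⟩ := Prod.mk.inj hyx
      exact .inl rfl
  · have hcycle : IsCycle E [y, w, x] := isCycle_triple_iff.2
      ⟨by simpa [and_assoc] using hnodup, hRE _ _ hyw, hRE _ _ hwx, hxy⟩
    refine .inr ?_
    rcases hyw with hyw | hyw
    · rcases hwx with hwx | hwx
      · exact absurd (.tail (.single hyw) hwx) hno_return
      · obtain ⟨rfl, rfl⟩ := Prod.mk.inj hwx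
        exact ⟨y, hcycle.rotate_triple, .inr ⟨hyw, rfl⟩⟩
    · obtain ⟨rfl, rfl⟩ := Prod.mk.inj hyw
      rcases hwx with hwx | hwx
      · exact ⟨x, hcycle, .inl ⟨hwx, rfl⟩⟩
      · obtain ⟨rfl, -⟩ := Prod.mk.inj hwx
        simp at hnodup

theorem exists_forall_eq_or_eq_of_providesCycle
    (hcyc : ∀ c : List V, IsCycle E c → c.length ≤ 3) (hr : Redundant E (a, b)) :
    ∃ p q, ∀ e, Unsatisfied E e → ProvidesCycle E (a, b) e → e = p ∨ e = q := by
  have hclassify := fun e => eq_swap_or_exists_isCycle_of_providesCycle hcyc hr.1 (e := e)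
  by_cases hba : (b, a) ∈ E
  · refine ⟨(b, a), (b, a), fun e hunsat hprov => ?_⟩
    rcases hclassify e hunsat hprov with he | ⟨u, hu, h⟩
    · exact .inl he
    · obtain ⟨hbu, hua⟩ := not_necessary_of_isCycle_of_adj_swap hcyc hr hba hu
      rcases h with ⟨h, -⟩ | ⟨h, -⟩
      · exact absurd h hbu
      · exact absurd h hua
  by_cases htriangle : ∃ u, IsCycle E [a, b, u]
  · obtain ⟨u, hu⟩ := htriangle
    refine ⟨(u, a), (b, u), fun e hunsat hprov => ?_⟩
    rcases hclassify e hunsat hprov with rfl | ⟨v, hv, h⟩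
    · exact absurd hunsat.1 hba
    · obtain rfl := eq_of_isCycle_of_isCycle_of_redundant hcyc hr hu hv
      exact h.imp And.right And.right
  · refine ⟨(b, a), (b, a), fun e hunsat hprov => ?_⟩
    exact (hclassify e hunsat hprov).imp id fun ⟨u, hu, _⟩ => absurd ⟨u, hu⟩ htriangle

theorem redundant_provides_at_most_two_general (r : V × V)
    (hcyc : ∀ c : List V, IsCycle E c → c.length ≤ 3) (hr : Redundant E r) :
    {e : V × V | Unsatisfied E e ∧ ProvidesCycle E r e}.encard ≤ 2 := by
  obtain ⟨p, q, hpq⟩ := exists_forall_eq_or_eq_of_providesCycle hcyc hr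
  calc {e : V × V | Unsatisfied E e ∧ ProvidesCycle E r e}.encard
      ≤ ({p, q} : Set (V × V)).encard := Set.encard_le_encard fun e he => hpq e he.1 he.2
    _ ≤ ({q} : Set (V × V)).encard + 1 := Set.encard_insert_le _ _
    _ = 2 := by rw [Set.encard_singleton, one_add_one_eq_two]

end RedundantEdges

/-- Every redundant edge of `G` provides a cycle for at most two
unsatisfied edges of `G`. -/
theorem redundant_provides_at_most_two {V : Type*} [Fintype V] (E : Set (V × V))
    (hconn : StronglyConnects E)
    (hcyc : ∀ c : List V, IsCycle E c → c.length ≤ 3)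
    (hcard : 4 ≤ Fintype.card V)
    (hcut : ∀ w : V, ¬ IsCutVertex E w)
    (r : V × V) (hr : Redundant E r) :
    {e : V × V | Unsatisfied E e ∧ ProvidesCycle E r e}.ncard ≤ 2 := by
  exact (Set.encard_le_coe_iff_finite_ncard_le.1
    (redundant_provides_at_most_two_general r hcyc hr)).2
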